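/- Let C > 0 be a constant. There exists a deterministic online strategy for Builder such that, with probability at least (1 − o(1))·√C·e^{−C} as n → ∞, Builder purchases at most (1/2 + C^{−1/2}/2)·n edges among e_1, …, e_{τ_1} and her graph B_{τ_1} has minimum degree at least 1. -/

import Mathlib

open Finset Filter

namespace RGP

/-- Number of edges of the complete graph on `n` vertices. -/
def numEdges (n : ℕ) : ℕ := n * (n - 1) / 2

/-- An edge of the complete graph on `Fin n` (an unordered pair of distinct vertices). -/
abbrev EdgeType (n : ℕ) := {e : Sym2 (Fin n) // ¬ e.IsDiag}

/-- A uniformly random permutation of the edges of `K_n` is modelled by a bijection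
`σ` between positions `Fin (numEdges n)` and edges; `σ i` is the edge `e_{i+1}`. -/
abbrev Ord (n : ℕ) := Fin (numEdges n) ≃ EdgeType n

/-- Degree of a vertex `v` in a set `S` of edges. -/
def deg {n : ℕ} (S : Finset (Sym2 (Fin n))) (v : Fin n) : ℕ :=
  (S.filter (fun e => v ∈ e)).card

/-- The edge set `{e_1, …, e_m}` of `G_{n,m}` in the random graph process `σ`. -/
def procEdges {n : ℕ} (σ : Ord n) (m : ℕ) : Finset (Sym2 (Fin n)) :=
  (Finset.univ.filter (fun i : Fin (numEdges n) => (i : ℕ) < m)).image (fun i => (σ i).1)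

/-- The hitting time `τ_k` for minimum degree at least `k`. -/
noncomputable def tau {n : ℕ} (k : ℕ) (σ : Ord n) : ℕ :=
  sInf {m | ∀ v : Fin n, k ≤ deg (procEdges σ m) v}

open scoped Classical in
/-- The probability of an event under the uniformly random edge ordering. -/
noncomputable def Pr {n : ℕ} (p : Ord n → Prop) : ℝ :=
  ((Finset.univ : Finset (Ord n)).filter p).card / (Fintype.card (Ord n) : ℝ)

/-- A deterministic online strategy: given the sequence of edges revealed so far
(the last entry being the edge just revealed), decide whether to purchase it. -/
abbrev Strategy (n : ℕ) := List (Sym2 (Fin n)) → Bool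

/-- The list of the first `i` revealed edges `e_1, …, e_i`. -/
def prefixList {n : ℕ} (σ : Ord n) (i : ℕ) : List (Sym2 (Fin n)) :=
  (List.range i).filterMap (fun j => if h : j < numEdges n then some (σ ⟨j, h⟩).1 else none)

/-- `buy st σ i` is the edge set of Builder's graph `B_i`: the edges purchased by the
strategy `st` among `e_1, …, e_i`. -/
def buy {n : ℕ} (st : Strategy n) (σ : Ord n) : ℕ → Finset (Sym2 (Fin n))
  | 0 => ∅
  | i + 1 =>
    if h : i < numEdges n then
      if st (prefixList σ (i + 1)) then insert (σ ⟨i, h⟩).1 (buy st σ i)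
      else buy st σ i
    else buy st σ i

end RGP

/-!
Fix `θ < 1` close to `1`. During the first `m ≈ θCn/2` edges Builder keeps a greedy matching: she
buys an edge iff both its ends are uncovered. Afterwards she buys every edge that meets an
uncovered vertex. An exponential moment bound shows that the matching leaves at most `K = n/√C`
vertices uncovered with high probability. Since it spends one edge per two vertices and every
later edge covers a new vertex, she then buys at most `(n + K)/2` edges.

Isolated vertices are uncovered, so Builder succeeds iff the last isolated vertex disappears
together with the last uncovered one. After time `m` consider the ratio of the number of isolated
vertices to the size of the set `U` of uncovered vertices. No edge inside `U` has been revealed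
yet, and a vertex of `U` has revealed degree at most `D = O(log n)`, so the next edge hits the
vertices of `U` almost uniformly, and the ratio is a submartingale up to an error of order `D/n`
per covered vertex; subtracting a multiple of the harmonic number of `#U` pays for the error. At
the end the ratio is the indicator of success, and at time `m` its expectation is at least about
`n·e^{-C}/K = √C·e^{-C}`.
-/

namespace RGP

open scoped BigOperators

/-! ### Random orderings -/

section History

variable {α : Type*} {N : ℕ}

/-- The first `i` items of the ordering `σ`, most recent first, so that revealing one more item is
a `List.cons`. -/
def history (σ : Fin N ≃ α) (i : ℕ) : List α := ((List.ofFn σ).take i).reverse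

@[simp]
lemma history_zero (σ : Fin N ≃ α) : history σ 0 = [] := by simp [history]

lemma history_succ (σ : Fin N ≃ α) {i : ℕ} (hi : i < N) :
    history σ (i + 1) = σ ⟨i, hi⟩ :: history σ i := by
  simp [history, List.take_add_one, hi]

lemma length_history (σ : Fin N ≃ α) {i : ℕ} (hi : i ≤ N) : (history σ i).length = i := by
  simpa [history] using hi

lemma nodup_history (σ : Fin N ≃ α) (i : ℕ) : (history σ i).Nodup :=
  List.nodup_reverse.2 (((List.nodup_ofFn).2 σ.injective).sublist (List.take_sublist _ _))

lemma mem_history {σ : Fin N ≃ α} {i : ℕ} {a : α} : a ∈ history σ i ↔ (σ.symm a : ℕ) < i := by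
  simp only [history, List.mem_reverse, List.mem_take_iff_getElem, List.getElem_ofFn,
    List.length_ofFn]
  constructor
  · rintro ⟨j, hj, rfl⟩
    simp only [Equiv.symm_apply_apply]
    omega
  · intro h
    exact ⟨σ.symm a, lt_min h (σ.symm a).isLt, by simp⟩

lemma history_suffix (σ : Fin N ≃ α) {i j : ℕ} (hij : i ≤ j) : history σ i <:+ history σ j :=
  List.reverse_suffix.2 (List.take_prefix_take_left hij)

lemma history_swap (σ : Fin N ≃ α) {i : ℕ} {j k : Fin N} (hj : i ≤ j) (hk : i ≤ k) :
    history ((Equiv.swap j k).trans σ) i = history σ i := by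
  unfold history
  congr 1
  refine List.ext_getElem (by simp) fun l hl _ ↦ ?_
  simp only [List.length_take, List.length_ofFn, lt_min_iff] at hl
  simp only [List.getElem_take, List.getElem_ofFn, Equiv.trans_apply]
  rw [Equiv.swap_apply_of_ne_of_ne] <;> rw [Ne, Fin.ext_iff] <;> dsimp only <;> omega

variable [Fintype α] [DecidableEq α]

/-- The items that a history has not revealed yet. -/
def unseen (h : List α) : Finset α := h.toFinsetᶜ

@[simp]
lemma mem_unseen {h : List α} {a : α} : a ∈ unseen h ↔ a ∉ h := by simp [unseen]

lemma card_unseen {h : List α} (hh : h.Nodup) : #(unseen h) = Fintype.card α - h.length := by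
  rw [unseen, card_compl, List.toFinset_card_of_nodup hh]

lemma sub_lt_card_unseen [hN : Nonempty (Fin N ≃ α)] {h : List α} {m : ℕ} (hh : h.Nodup)
    (hm : h.length < m) : (N : ℝ) - m < #(unseen h) := by
  have hcard : Fintype.card α = N := by simpa using (Fintype.card_congr hN.some).symm
  rw [sub_lt_iff_lt_add]
  exact_mod_cast (by have := card_unseen hh; lia : N < #(unseen h) + m)

/-- Swapping positions `i` and `j ≥ i` shows that item number `i` is uniformly distributed over the
items not among the first `i`. -/
lemma expect_history_succ (F : List α → ℝ) {i : ℕ} (hi : i < N) :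
    𝔼 σ : Fin N ≃ α, F (history σ (i + 1)) =
      𝔼 σ : Fin N ≃ α, 𝔼 a ∈ unseen (history σ i), F (a :: history σ i) := by
  have by_position (σ : Fin N ≃ α) : 𝔼 a ∈ unseen (history σ i), F (a :: history σ i) =
      𝔼 j ∈ Ici (⟨i, hi⟩ : Fin N), F (σ j :: history σ i) := by
    symm
    refine expect_nbij σ (fun j hj ↦ ?_) (fun _ _ ↦ rfl) σ.injective.injOn fun a ha ↦ ?_
    · simpa [mem_history, Fin.le_def] using hj
    · exact ⟨σ.symm a, by simpa [mem_history, Fin.le_def] using ha, σ.apply_symm_apply a⟩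
  have by_symmetry (j : Fin N) (hj : j ∈ Ici (⟨i, hi⟩ : Fin N)) :
      𝔼 σ : Fin N ≃ α, F (σ j :: history σ i) = 𝔼 σ : Fin N ≃ α, F (history σ (i + 1)) := by
    refine Fintype.expect_equiv (Equiv.equivCongr (Equiv.swap ⟨i, hi⟩ j) (Equiv.refl α)) _ _
      fun σ ↦ ?_
    have hcongr : Equiv.equivCongr (Equiv.swap ⟨i, hi⟩ j) (Equiv.refl α) σ =
        (Equiv.swap ⟨i, hi⟩ j).trans σ := by
      ext; simp
    rw [hcongr, history_succ _ hi, history_swap σ le_rfl (Fin.le_def.1 (mem_Ici.1 hj))]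
    simp
  rw [expect_congr rfl fun σ _ ↦ by_position σ, expect_comm, expect_congr rfl by_symmetry,
    expect_const nonempty_Ici]

lemma pow_mul_expect_history_le {F : List α → ℝ} {ρ : ℝ} (hρ : 0 ≤ ρ) {i k : ℕ} (hik : i + k ≤ N)
    (hF : ∀ h : List α, h.Nodup → i ≤ h.length → h.length < i + k →
      ρ * F h ≤ 𝔼 a ∈ unseen h, F (a :: h)) :
    ρ ^ k * 𝔼 σ : Fin N ≃ α, F (history σ i) ≤ 𝔼 σ : Fin N ≃ α, F (history σ (i + k)) := by
  induction k with
  | zero => simp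
  | succ k ih =>
    calc ρ ^ (k + 1) * 𝔼 σ : Fin N ≃ α, F (history σ i)
        = ρ * (ρ ^ k * 𝔼 σ : Fin N ≃ α, F (history σ i)) := by ring
      _ ≤ ρ * 𝔼 σ : Fin N ≃ α, F (history σ (i + k)) :=
        mul_le_mul_of_nonneg_left
          (ih (by lia) fun h hh hih hhk ↦ hF h hh hih (by lia)) hρ
      _ ≤ 𝔼 σ : Fin N ≃ α, 𝔼 a ∈ unseen (history σ (i + k)), F (a :: history σ (i + k)) := by
        rw [mul_expect]
        refine expect_le_expect fun σ _ ↦ hF _ (nodup_history σ _) ?_ ?_ <;>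
          rw [length_history σ (by lia)] <;> lia
      _ = 𝔼 σ : Fin N ≃ α, F (history σ (i + (k + 1))) :=
        (expect_history_succ F (by lia)).symm

lemma expect_history_le_pow_mul {F : List α → ℝ} {ρ : ℝ} (hρ : 0 ≤ ρ) {i k : ℕ} (hik : i + k ≤ N)
    (hF : ∀ h : List α, h.Nodup → i ≤ h.length → h.length < i + k →
      𝔼 a ∈ unseen h, F (a :: h) ≤ ρ * F h) :
    𝔼 σ : Fin N ≃ α, F (history σ (i + k)) ≤ ρ ^ k * 𝔼 σ : Fin N ≃ α, F (history σ i) := by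
  have hneg := pow_mul_expect_history_le (F := fun h ↦ -F h) hρ hik fun h hh hih hhk ↦ by
    simpa only [mul_neg, expect_neg_distrib, neg_le_neg_iff] using hF h hh hih hhk
  simpa only [mul_neg, expect_neg_distrib, neg_le_neg_iff] using hneg

end History

/-! ### Edges of the complete graph -/

section Edge

/-- An edge of the complete graph on `V`; `EdgeType n` is `Edge (Fin n)`. -/
abbrev Edge (V : Type*) := {e : Sym2 V // ¬ e.IsDiag}

variable {V : Type*} [DecidableEq V]

/-- The number of endpoints of the edge `e` that lie in `X`. -/
def endsIn (X : Finset V) (e : Edge V) : ℕ := #{v ∈ X | v ∈ e.1}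

lemma endsIn_mono {X Y : Finset V} (h : X ⊆ Y) (e : Edge V) : endsIn X e ≤ endsIn Y e :=
  card_le_card (filter_subset_filter _ h)

lemma endsIn_le_two (X : Finset V) (e : Edge V) : endsIn X e ≤ 2 := by
  calc endsIn X e ≤ #e.1.toFinset := card_le_card fun v ↦ by simp
    _ ≤ 2 := (Sym2.card_toFinset_of_not_isDiag e.1 e.2).le

lemma endsIn_eq_two_iff {X : Finset V} {e : Edge V} : endsIn X e = 2 ↔ ∀ v ∈ e.1, v ∈ X := by
  have hcard := Sym2.card_toFinset_of_not_isDiag e.1 e.2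
  have hsub : {v ∈ X | v ∈ e.1} ⊆ e.1.toFinset := fun v ↦ by simp
  calc endsIn X e = 2 ↔ {v ∈ X | v ∈ e.1} = e.1.toFinset := by
        rw [endsIn, ← hcard]
        exact ⟨fun h ↦ eq_of_subset_of_card_le hsub h.ge, fun h ↦ by rw [h]⟩
    _ ↔ ∀ v ∈ e.1, v ∈ X := by simp [Finset.ext_iff]

lemma endsIn_pos_iff {X : Finset V} {e : Edge V} : 0 < endsIn X e ↔ ∃ v ∈ X, v ∈ e.1 := by
  simp [endsIn, card_pos, Finset.Nonempty]

lemma card_filter_notMem_add_endsIn (X : Finset V) (e : Edge V) :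
    #{v ∈ X | v ∉ e.1} + endsIn X e = #X := by
  rw [add_comm]
  exact card_filter_add_card_filter_not _

lemma sum_endsIn (A : Finset (Edge V)) (X : Finset V) :
    ∑ e ∈ A, endsIn X e = ∑ v ∈ X, #{e ∈ A | v ∈ e.1} := by
  simp only [endsIn, card_filter]
  exact sum_comm

variable [Fintype V]

/-- The edges of the complete graph on `U`. -/
def edgesWithin (U : Finset V) : Finset (Edge V) := {e | endsIn U e = 2}

lemma mem_edgesWithin {U : Finset V} {e : Edge V} : e ∈ edgesWithin U ↔ endsIn U e = 2 := by
  simp [edgesWithin]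

lemma card_filter_mem_edgesWithin {U : Finset V} {v : V} (hv : v ∈ U) :
    #{e ∈ edgesWithin U | v ∈ e.1} = #U - 1 := by
  rw [← card_erase_of_mem hv]
  symm
  refine card_bij (fun w hw ↦ ⟨s(v, w), fun h ↦ ne_of_mem_erase hw h.symm⟩) ?_ ?_ ?_
  · intro w hw
    simp [mem_edgesWithin, endsIn_eq_two_iff, hv, mem_of_mem_erase hw]
  · intro w₁ _ w₂ _ h
    exact Sym2.congr_right.1 (congrArg Subtype.val h)
  · rintro e he
    obtain ⟨hU, hve⟩ := mem_filter.1 he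
    rw [mem_edgesWithin, endsIn_eq_two_iff] at hU
    exact ⟨Sym2.Mem.other hve,
      mem_erase.2 ⟨Sym2.other_ne e.2 hve, hU _ (Sym2.other_mem hve)⟩,
      Subtype.ext (Sym2.other_spec hve)⟩

lemma card_filter_mem_edge (v : V) : #{e : Edge V | v ∈ e.1} = Fintype.card V - 1 := by
  have huniv : edgesWithin (univ : Finset V) = univ := by
    ext e
    simp [mem_edgesWithin, endsIn_eq_two_iff]
  rw [← huniv, card_filter_mem_edgesWithin (mem_univ v), card_univ]

lemma sum_endsIn_edgesWithin {U X : Finset V} (hX : X ⊆ U) :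
    ∑ e ∈ edgesWithin U, endsIn X e = #X * (#U - 1) := by
  rw [sum_endsIn, sum_congr rfl fun v hv ↦ card_filter_mem_edgesWithin (hX hv), sum_const,
    smul_eq_mul]

lemma two_mul_card_edgesWithin (U : Finset V) : 2 * #(edgesWithin U) = #U * (#U - 1) := by
  rw [← sum_endsIn_edgesWithin Subset.rfl, sum_congr rfl fun e he ↦ mem_edgesWithin.1 he,
    sum_const, smul_eq_mul, mul_comm]

end Edge

/-! ### Degrees in the random graph process -/

section Degrees

variable {V : Type*} [DecidableEq V]

/-- The degree of `v` in the graph of the edges revealed by `h`. -/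
def seenDegree (h : List (Edge V)) (v : V) : ℕ := h.countP (v ∈ ·.1)

lemma seenDegree_nil (v : V) : seenDegree ([] : List (Edge V)) v = 0 := rfl

lemma seenDegree_cons (e : Edge V) (h : List (Edge V)) (v : V) :
    seenDegree (e :: h) v = seenDegree h v + if v ∈ e.1 then 1 else 0 := by
  simp [seenDegree, List.countP_cons]

lemma seenDegree_eq_zero {h : List (Edge V)} {v : V} :
    seenDegree h v = 0 ↔ ∀ e ∈ h, v ∉ e.1 := by
  simp [seenDegree, List.countP_eq_zero]

lemma seenDegree_le_of_suffix {t h : List (Edge V)} (ht : t <:+ h) (v : V) :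
    seenDegree t v ≤ seenDegree h v :=
  ht.sublist.countP_le

variable [Fintype V]

/-- The isolated vertices of the graph of the edges revealed by `h`. -/
def isolated (h : List (Edge V)) : Finset V := {v | seenDegree h v = 0}

lemma mem_isolated {h : List (Edge V)} {v : V} : v ∈ isolated h ↔ seenDegree h v = 0 := by
  simp [isolated]

lemma isolated_cons (e : Edge V) (h : List (Edge V)) :
    isolated (e :: h) = {v ∈ isolated h | v ∉ e.1} := by
  ext v
  simp [mem_isolated, seenDegree_cons]

lemma isolated_anti {t h : List (Edge V)} (ht : t <:+ h) : isolated h ⊆ isolated t := fun v hv ↦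
  mem_isolated.2 (Nat.le_zero.1 ((seenDegree_le_of_suffix ht v).trans (mem_isolated.1 hv).le))

lemma card_unseen_filter_mem_add_seenDegree {h : List (Edge V)} (hh : h.Nodup) (v : V) :
    #{e ∈ unseen h | v ∈ e.1} + seenDegree h v = Fintype.card V - 1 := by
  have hseen : seenDegree h v = #{e ∈ h.toFinset | v ∈ e.1} := by
    rw [seenDegree, List.countP_eq_length_filter, ← List.toFinset_card_of_nodup (hh.filter _),
      List.toFinset_filter]
    simp
  rw [hseen, unseen, ← card_filter_mem_edge v, ← card_union_of_disjoint
    (disjoint_filter_filter disjoint_compl_left), ← filter_union, union_comm, union_compl]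

lemma cast_card_unseen_filter_mem {h : List (Edge V)} (hh : h.Nodup) (v : V) :
    (#{e ∈ unseen h | v ∈ e.1} : ℝ) = Fintype.card V - 1 - seenDegree h v := by
  have hpos : 1 ≤ Fintype.card V := Fintype.card_pos_iff.2 ⟨v⟩
  rw [eq_sub_iff_add_eq, ← Nat.cast_pred hpos]
  exact_mod_cast card_unseen_filter_mem_add_seenDegree hh v

lemma sum_unseen_endsIn {h : List (Edge V)} (hh : h.Nodup) (X : Finset V) :
    ∑ e ∈ unseen h, (endsIn X e : ℝ) =
      ∑ v ∈ X, ((Fintype.card V : ℝ) - 1 - seenDegree h v) := by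
  rw [← Nat.cast_sum, sum_endsIn, Nat.cast_sum]
  exact sum_congr rfl fun v _ ↦ cast_card_unseen_filter_mem hh v

/-- The generating function of the degrees; at `z = 0` it counts the isolated vertices. -/
noncomputable def degreeGF (z : ℝ) (h : List (Edge V)) : ℝ := ∑ v, z ^ seenDegree h v

lemma degreeGF_zero (h : List (Edge V)) : degreeGF 0 h = #(isolated h) := by
  simp [degreeGF, zero_pow_eq, isolated]

lemma degreeGF_nil (z : ℝ) : degreeGF z ([] : List (Edge V)) = Fintype.card V := by
  simp [degreeGF, seenDegree_nil]

lemma degreeGF_nonneg {z : ℝ} (hz : 0 ≤ z) (h : List (Edge V)) : 0 ≤ degreeGF z h :=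
  sum_nonneg fun _ _ ↦ pow_nonneg hz _

lemma pow_le_degreeGF {z : ℝ} (hz : 1 ≤ z) {h : List (Edge V)} {v : V} {D : ℕ}
    (hD : D ≤ seenDegree h v) : z ^ D ≤ degreeGF z h :=
  (pow_le_pow_right₀ hz hD).trans
    (single_le_sum (f := fun w ↦ z ^ seenDegree h w) (fun _ _ ↦ by positivity) (mem_univ v))

lemma expect_degreeGF_cons {h : List (Edge V)} (hh : h.Nodup) (hne : (unseen h).Nonempty) (z : ℝ) :
    𝔼 e ∈ unseen h, degreeGF z (e :: h) =
      ∑ v, z ^ seenDegree h v *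
        (1 + (z - 1) * ((Fintype.card V - 1 - seenDegree h v) / #(unseen h))) := by
  have hstep (e : Edge V) (v : V) : z ^ seenDegree (e :: h) v =
      z ^ seenDegree h v * (1 + (z - 1) * if v ∈ e.1 then 1 else 0) := by
    rw [seenDegree_cons]
    split_ifs <;> ring
  simp only [degreeGF, hstep, expect_sum_comm, ← mul_expect, expect_add_distrib,
    expect_const hne]
  refine sum_congr rfl fun v _ ↦ ?_
  rw [← cast_card_unseen_filter_mem hh, expect_eq_sum_div_card, sum_boole]

end Degrees

section DegreesInProcess

variable {V : Type*} [DecidableEq V] [Fintype V] {t z : ℝ}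

lemma unseen_incident_div_le (ht : 0 ≤ t) {h : List (Edge V)}
    (htu : (Fintype.card V : ℝ) - 1 ≤ t * #(unseen h)) (v : V) :
    ((Fintype.card V : ℝ) - 1 - seenDegree h v) / #(unseen h) ≤ t :=
  div_le_of_le_mul₀ (by positivity) ht ((sub_le_self _ (by positivity)).trans htu)

lemma mul_degreeGF_le_expect_cons (hz : 0 ≤ z) (hz1 : z ≤ 1) (ht : 0 ≤ t) {h : List (Edge V)}
    (hh : h.Nodup) (hne : (unseen h).Nonempty)
    (htu : (Fintype.card V : ℝ) - 1 ≤ t * #(unseen h)) :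
    (1 + (z - 1) * t) * degreeGF z h ≤ 𝔼 e ∈ unseen h, degreeGF z (e :: h) := by
  rw [expect_degreeGF_cons hh hne, degreeGF, mul_sum]
  refine sum_le_sum fun v _ ↦ ?_
  rw [mul_comm]
  refine mul_le_mul_of_nonneg_left (add_le_add_right ?_ 1) (by positivity)
  exact mul_le_mul_of_nonpos_left (unseen_incident_div_le ht htu v) (sub_nonpos.2 hz1)

lemma expect_degreeGF_cons_le (hz : 1 ≤ z) (ht : 0 ≤ t) {h : List (Edge V)} (hh : h.Nodup)
    (hne : (unseen h).Nonempty) (htu : (Fintype.card V : ℝ) - 1 ≤ t * #(unseen h)) :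
    𝔼 e ∈ unseen h, degreeGF z (e :: h) ≤ (1 + (z - 1) * t) * degreeGF z h := by
  rw [expect_degreeGF_cons hh hne, degreeGF, mul_sum]
  refine sum_le_sum fun v _ ↦ ?_
  rw [mul_comm (1 + (z - 1) * t)]
  refine mul_le_mul_of_nonneg_left (add_le_add_right ?_ 1) (by positivity)
  exact mul_le_mul_of_nonneg_left (unseen_incident_div_le ht htu v) (sub_nonneg.2 hz)

variable {N m : ℕ} [Nonempty (Fin N ≃ Edge V)]

lemma unseen_nonempty_and_le (ht : 0 ≤ t) (hmN : m ≤ N)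
    (htN : (Fintype.card V : ℝ) - 1 ≤ t * (N - m)) {h : List (Edge V)} (hh : h.Nodup)
    (hm : h.length < m) :
    (unseen h).Nonempty ∧ (Fintype.card V : ℝ) - 1 ≤ t * #(unseen h) := by
  have hlt := sub_lt_card_unseen (N := N) hh hm
  have hmN' : (m : ℝ) ≤ N := Nat.cast_le.2 hmN
  refine ⟨card_pos.1 (Nat.cast_pos.1 (by linarith : (0 : ℝ) < #(unseen h))), ?_⟩
  exact htN.trans (mul_le_mul_of_nonneg_left hlt.le ht)

lemma pow_mul_card_le_expect_degreeGF (hz : 0 ≤ z) (hz1 : z ≤ 1) (ht : 0 ≤ t) (ht1 : t ≤ 1)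
    (hmN : m ≤ N) (htN : (Fintype.card V : ℝ) - 1 ≤ t * (N - m)) :
    (1 + (z - 1) * t) ^ m * Fintype.card V ≤
      𝔼 σ : Fin N ≃ Edge V, degreeGF z (history σ m) := by
  have hρ : 0 ≤ 1 + (z - 1) * t := by nlinarith
  have key := pow_mul_expect_history_le (N := N) (F := degreeGF (V := V) z) hρ (i := 0) (k := m)
    (by simpa using hmN) fun h hh _ hm ↦ by
      obtain ⟨hne, htu⟩ := unseen_nonempty_and_le ht hmN htN hh (by simpa using hm)
      exact mul_degreeGF_le_expect_cons hz hz1 ht hh hne htu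
  simpa [degreeGF_nil] using key

lemma expect_degreeGF_le_pow_mul_card (hz : 1 ≤ z) (ht : 0 ≤ t) (hmN : m ≤ N)
    (htN : (Fintype.card V : ℝ) - 1 ≤ t * (N - m)) :
    𝔼 σ : Fin N ≃ Edge V, degreeGF z (history σ m) ≤
      (1 + (z - 1) * t) ^ m * Fintype.card V := by
  have hρ : 0 ≤ 1 + (z - 1) * t := by nlinarith
  have key := expect_history_le_pow_mul (N := N) (F := degreeGF (V := V) z) hρ (i := 0) (k := m)
    (by simpa using hmN) fun h hh _ hm ↦ by
      obtain ⟨hne, htu⟩ := unseen_nonempty_and_le ht hmN htN hh (by simpa using hm)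
      exact expect_degreeGF_cons_le hz ht hh hne htu
  simpa [degreeGF_nil] using key

lemma le_expect_card_isolated (ht : 0 ≤ t) (ht1 : t ≤ 1) (hmN : m ≤ N)
    (htN : (Fintype.card V : ℝ) - 1 ≤ t * (N - m)) :
    (1 - t) ^ m * Fintype.card V ≤ 𝔼 σ : Fin N ≃ Edge V, (#(isolated (history σ m)) : ℝ) := by
  simpa [degreeGF_zero, ← sub_eq_add_neg] using
    pow_mul_card_le_expect_degreeGF le_rfl zero_le_one ht ht1 hmN htN

end DegreesInProcess

/-! ### Builder's strategy -/

section Strategy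

variable {V : Type*} [DecidableEq V]

/-- The number of endpoints that edge number `k + 1` must have among the uncovered vertices for
Builder to buy it: in the first `m` rounds she builds a greedy matching, afterwards she buys every
edge that covers a new vertex. -/
def quota (m k : ℕ) : ℕ := if k < m then 2 else 1

variable [Fintype V] {m : ℕ} {e : Edge V} {h : List (Edge V)}

/-- The vertices not covered by Builder's edges once the edges of `h` have been revealed. -/
def uncovered (m : ℕ) : List (Edge V) → Finset V
  | [] => univ
  | e :: h =>
    if quota m h.length ≤ endsIn (uncovered m h) e then {v ∈ uncovered m h | v ∉ e.1}
    else uncovered m h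

/-- Builder's purchase rule: having seen `h`, she buys the next edge `e`. -/
def Buys (m : ℕ) (h : List (Edge V)) (e : Edge V) : Prop :=
  quota m h.length ≤ endsIn (uncovered m h) e

instance : Decidable (Buys m h e) := inferInstanceAs (Decidable (_ ≤ _))

/-- Builder's edges once the edges of `h` have been revealed. -/
def bought (m : ℕ) : List (Edge V) → Finset (Edge V)
  | [] => ∅
  | e :: h => if Buys m h e then insert e (bought m h) else bought m h

lemma quota_pos (m k : ℕ) : 0 < quota m k := by
  unfold quota
  split_ifs <;> simp

lemma quota_of_lt {k : ℕ} (hk : k < m) : quota m k = 2 := if_pos hk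

lemma quota_of_le {k : ℕ} (hk : m ≤ k) : quota m k = 1 := if_neg hk.not_gt

lemma uncovered_cons (m : ℕ) (h : List (Edge V)) (e : Edge V) : uncovered m (e :: h) =
    if Buys m h e then {v ∈ uncovered m h | v ∉ e.1} else uncovered m h := rfl

lemma uncovered_cons_subset (m : ℕ) (h : List (Edge V)) (e : Edge V) :
    uncovered m (e :: h) ⊆ uncovered m h := by
  rw [uncovered_cons]
  split_ifs
  exacts [filter_subset _ _, Subset.rfl]

lemma uncovered_anti {t : List (Edge V)} (ht : t <:+ h) : uncovered m h ⊆ uncovered m t := by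
  induction h with
  | nil => rw [List.suffix_nil.1 ht]
  | cons e h ih =>
    obtain rfl | ht := List.suffix_cons_iff.1 ht
    · rfl
    · exact (uncovered_cons_subset m h e).trans (ih ht)

lemma uncovered_cons_of_le (hm : m ≤ h.length) (e : Edge V) :
    uncovered m (e :: h) = {v ∈ uncovered m h | v ∉ e.1} := by
  have hbuys : Buys m h e ↔ ∃ v ∈ uncovered m h, v ∈ e.1 := by
    rw [Buys, quota_of_le hm, Nat.succ_le_iff, endsIn_pos_iff]
  rw [uncovered_cons]
  split_ifs with hb
  · rfl
  · rw [filter_true_of_mem]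
    exact fun v hv hve ↦ hb (hbuys.2 ⟨v, hv, hve⟩)

lemma isolated_subset_uncovered (m : ℕ) (h : List (Edge V)) : isolated h ⊆ uncovered m h := by
  induction h with
  | nil => exact subset_univ _
  | cons e h ih =>
    rw [isolated_cons, uncovered_cons]
    split_ifs
    · exact filter_subset_filter _ ih
    · exact (filter_subset _ _).trans ih

lemma exists_mem_bought {v : V} (hv : v ∉ uncovered m h) : ∃ e ∈ bought m h, v ∈ e.1 := by
  induction h with
  | nil => simp [uncovered] at hv
  | cons e h ih =>
    rw [uncovered_cons] at hv
    rw [bought]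
    split_ifs at hv ⊢ with hb
    · by_cases hve : v ∈ e.1
      · exact ⟨e, mem_insert_self _ _, hve⟩
      · obtain ⟨e', he', hve'⟩ := ih fun hU ↦ hv (mem_filter.2 ⟨hU, hve⟩)
        exact ⟨e', mem_insert_of_mem he', hve'⟩
    · exact ih hv

lemma edgesWithin_uncovered_subset (m : ℕ) (h : List (Edge V)) :
    edgesWithin (uncovered m h) ⊆ unseen h := by
  intro e he
  rw [mem_unseen]
  rw [mem_edgesWithin] at he
  induction h with
  | nil => exact List.not_mem_nil
  | cons e' h ih =>
    have he2 : endsIn (uncovered m h) e = 2 :=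
      (endsIn_le_two _ e).antisymm (he.ge.trans (endsIn_mono (uncovered_cons_subset m h e') e))
    rintro (_ | ⟨_, hmem⟩)
    · have hb : Buys m h e := by
        rw [Buys, he2, quota]
        split_ifs <;> simp
      have h0 : endsIn (uncovered m (e :: h)) e = 0 := by
        rw [uncovered_cons, if_pos hb]
        simp [endsIn, filter_filter]
      omega
    · exact ih he2 hmem

lemma card_uncovered_cons_of_buys (hb : Buys m h e) :
    #(uncovered m (e :: h)) + endsIn (uncovered m h) e = #(uncovered m h) := by
  rw [uncovered_cons, if_pos hb, card_filter_notMem_add_endsIn]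

lemma card_bought_cons_of_buys (hb : Buys m h e) : #(bought m (e :: h)) ≤ #(bought m h) + 1 := by
  rw [bought, if_pos hb]
  exact card_insert_le _ _

lemma two_mul_card_bought_add_card_uncovered_le (hm : h.length ≤ m) :
    2 * #(bought m h) + #(uncovered m h) ≤ Fintype.card V := by
  induction h with
  | nil => simp [bought, uncovered]
  | cons e h ih =>
    have hlt : h.length < m := hm
    by_cases hb : Buys m h e
    · have h2 : 2 ≤ endsIn (uncovered m h) e := by simpa only [Buys, quota_of_lt hlt] using hb
      have := card_uncovered_cons_of_buys hb
      have := card_bought_cons_of_buys hb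
      have := ih hlt.le
      omega
    · simpa only [bought, uncovered_cons, if_neg hb] using ih hlt.le

lemma card_bought_add_card_uncovered_cons_le (m : ℕ) (h : List (Edge V)) (e : Edge V) :
    #(bought m (e :: h)) + #(uncovered m (e :: h)) ≤ #(bought m h) + #(uncovered m h) := by
  by_cases hb : Buys m h e
  · have hpos : 0 < endsIn (uncovered m h) e := (quota_pos _ _).trans_le hb
    have := card_uncovered_cons_of_buys hb
    have := card_bought_cons_of_buys hb
    omega
  · simp only [bought, uncovered_cons, if_neg hb, le_rfl]

lemma card_bought_add_card_uncovered_anti {t : List (Edge V)} (ht : t <:+ h) :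
    #(bought m h) + #(uncovered m h) ≤ #(bought m t) + #(uncovered m t) := by
  induction h with
  | nil => rw [List.suffix_nil.1 ht]
  | cons e h ih =>
    obtain rfl | ht := List.suffix_cons_iff.1 ht
    · rfl
    · exact (card_bought_add_card_uncovered_cons_le m h e).trans (ih ht)

end Strategy

section MatchingPhase

variable {V : Type*} [DecidableEq V] [Fintype V] {m : ℕ} {δ K p : ℝ}

/-- An exponential moment of the number `u` of uncovered vertices, cut off at the target `K`. -/
noncomputable def excess (δ K : ℝ) (u : ℕ) : ℝ := if K < u then Real.exp (δ * (u - K)) else 0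

lemma excess_nonneg (δ K : ℝ) (u : ℕ) : 0 ≤ excess δ K u := by
  unfold excess
  positivity

lemma excess_le_exp (δ K : ℝ) (u : ℕ) : excess δ K u ≤ Real.exp (δ * (u - K)) := by
  unfold excess
  split_ifs
  exacts [le_rfl, Real.exp_nonneg _]

lemma excess_mono (hδ : 0 ≤ δ) : Monotone (excess δ K) := by
  intro a b hab
  have hab' : (a : ℝ) ≤ b := Nat.cast_le.2 hab
  unfold excess
  split_ifs with ha hb
  · gcongr
  · exact absurd (ha.trans_le hab') hb
  · positivity
  · rfl

lemma excess_le_exp_mul {a b : ℕ} (hab : a + 2 = b) :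
    excess δ K a ≤ Real.exp (-2 * δ) * excess δ K b := by
  subst hab
  unfold excess
  split_ifs with ha hb
  · rw [← Real.exp_add]
    gcongr
    push_cast
    linarith
  · push_cast at hb
    linarith
  · positivity
  · simp

lemma one_le_excess (hδ : 0 ≤ δ) {u : ℕ} (hu : K < u) : 1 ≤ excess δ K u := by
  rw [excess, if_pos hu]
  exact Real.one_le_exp (mul_nonneg hδ (by linarith))

lemma le_card_edgesWithin_div_card_unseen (hp0 : 0 ≤ p) (hK : 1 ≤ K)
    (hp : p * (Fintype.card V * (Fintype.card V - 1)) ≤ K * (K - 1)) {h : List (Edge V)}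
    (hu : K < #(uncovered m h)) :
    p ≤ #(edgesWithin (uncovered m h)) / #(unseen h) := by
  set u := #(uncovered m h)
  have hwithin : 2 * (#(edgesWithin (uncovered m h)) : ℝ) = u * (u - 1) := by
    rw [← Nat.cast_pred (Nat.cast_pos.1 (by linarith : (0 : ℝ) < u))]
    exact_mod_cast two_mul_card_edgesWithin (uncovered m h)
  have hunseen : 2 * (#(unseen h) : ℝ) ≤ Fintype.card V * (Fintype.card V - 1) := by
    have hle : (#(unseen h) : ℝ) ≤ (Fintype.card V).choose 2 := by
      exact_mod_cast (card_le_univ (unseen h)).trans_eq Sym2.card_subtype_not_diag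
    rw [Nat.cast_choose_two] at hle
    linarith
  have hpos : (0 : ℝ) < #(unseen h) := by
    have hle : (#(edgesWithin (uncovered m h)) : ℝ) ≤ #(unseen h) :=
      Nat.cast_le.2 (card_le_card (edgesWithin_uncovered_subset m h))
    nlinarith
  rw [le_div_iff₀ hpos]
  nlinarith [mul_le_mul_of_nonneg_left hunseen hp0]

lemma excess_uncovered_cons_le (hδ : 0 ≤ δ) {h : List (Edge V)} (hm : h.length < m) (e : Edge V) :
    excess δ K #(uncovered m (e :: h)) ≤ excess δ K #(uncovered m h) *
      (1 - (1 - Real.exp (-2 * δ)) * if e ∈ edgesWithin (uncovered m h) then 1 else 0) := by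
  split_ifs with he
  · rw [mem_edgesWithin] at he
    have hb : Buys m h e := by rw [Buys, quota_of_lt hm, he]
    have hcard := card_uncovered_cons_of_buys hb
    rw [he] at hcard
    linarith [excess_le_exp_mul (δ := δ) (K := K) hcard]
  · simpa using excess_mono hδ (card_le_card (uncovered_cons_subset m h e))

lemma expect_excess_cons_le (hδ : 0 ≤ δ) (hp0 : 0 ≤ p) (hK : 1 ≤ K)
    (hp : p * (Fintype.card V * (Fintype.card V - 1)) ≤ K * (K - 1)) {h : List (Edge V)}
    (hm : h.length < m) :
    𝔼 e ∈ unseen h, excess δ K #(uncovered m (e :: h)) ≤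
      Real.exp (-p * (1 - Real.exp (-2 * δ))) * excess δ K #(uncovered m h) := by
  have hrhs : 0 ≤ Real.exp (-p * (1 - Real.exp (-2 * δ))) * excess δ K #(uncovered m h) :=
    mul_nonneg (Real.exp_nonneg _) (excess_nonneg _ _ _)
  obtain hne | hne := (unseen h).eq_empty_or_nonempty
  · simpa only [hne, expect_empty] using hrhs
  obtain hu | hu := le_or_gt (#(uncovered m h) : ℝ) K
  · have hzero (e : Edge V) : excess δ K #(uncovered m (e :: h)) = 0 :=
      if_neg (not_lt.2 ((Nat.cast_le.2 (card_le_card (uncovered_cons_subset m h e))).trans hu))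
    simpa only [hzero, expect_const_zero] using hrhs
  have hq := le_card_edgesWithin_div_card_unseen hp0 hK hp hu
  set q : ℝ := #(edgesWithin (uncovered m h)) / #(unseen h)
  have hδ' : 0 ≤ 1 - Real.exp (-2 * δ) := by
    rw [sub_nonneg, Real.exp_le_one_iff]
    linarith
  calc 𝔼 e ∈ unseen h, excess δ K #(uncovered m (e :: h))
      ≤ 𝔼 e ∈ unseen h, excess δ K #(uncovered m h) *
          (1 - (1 - Real.exp (-2 * δ)) * if e ∈ edgesWithin (uncovered m h) then 1 else 0) :=
        expect_le_expect fun e _ ↦ excess_uncovered_cons_le hδ hm e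
    _ = excess δ K #(uncovered m h) * (1 - (1 - Real.exp (-2 * δ)) * q) := by
        rw [← mul_expect, expect_sub_distrib, ← mul_expect, expect_const hne,
          expect_eq_sum_div_card, sum_boole, filter_mem_eq_inter,
          inter_eq_right.2 (edgesWithin_uncovered_subset m h)]
    _ ≤ excess δ K #(uncovered m h) * Real.exp (-p * (1 - Real.exp (-2 * δ))) := by
        refine mul_le_mul_of_nonneg_left ?_ (excess_nonneg _ _ _)
        linarith [Real.add_one_le_exp (-p * (1 - Real.exp (-2 * δ))),
          mul_le_mul_of_nonneg_left hq hδ']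
    _ = Real.exp (-p * (1 - Real.exp (-2 * δ))) * excess δ K #(uncovered m h) := mul_comm _ _

lemma expect_excess_le {N : ℕ} [Nonempty (Fin N ≃ Edge V)] (hδ : 0 ≤ δ) (hp0 : 0 ≤ p) (hK : 1 ≤ K)
    (hp : p * (Fintype.card V * (Fintype.card V - 1)) ≤ K * (K - 1)) (hmN : m ≤ N) :
    𝔼 σ : Fin N ≃ Edge V, excess δ K #(uncovered m (history σ m)) ≤
      Real.exp (-p * (1 - Real.exp (-2 * δ))) ^ m * Real.exp (δ * (Fintype.card V - K)) := by
  have key := expect_history_le_pow_mul (N := N) (F := fun h ↦ excess δ K #(uncovered (V := V) m h))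
    (ρ := Real.exp (-p * (1 - Real.exp (-2 * δ)))) (Real.exp_nonneg _) (i := 0) (k := m)
    (by simpa using hmN) fun h _ _ hm ↦ expect_excess_cons_le hδ hp0 hK hp (by simpa using hm)
  simp only [zero_add, history_zero, Fintype.expect_const, uncovered, card_univ] at key
  exact key.trans (mul_le_mul_of_nonneg_left (excess_le_exp _ _ _) (by positivity))

end MatchingPhase

/-! ### The ratio of isolated to uncovered vertices -/

section OnTrack

variable {V : Type*} [DecidableEq V] [Fintype V] {m D : ℕ} {K : ℝ} {t h : List (Edge V)}

/-- Builder has not yet been left with uncovered vertices none of which is isolated, which would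
make her lose, and after `m` edges few vertices were uncovered and all degrees were small. -/
def OnTrack (m : ℕ) (K : ℝ) (D : ℕ) (h : List (Edge V)) : Prop :=
  ∀ t, t <:+ h → (isolated t = ∅ → uncovered m t = ∅) ∧
    (t.length = m → #(uncovered m t) ≤ K ∧ ∀ v, seenDegree t v ≤ D)

lemma OnTrack.of_suffix (hh : OnTrack m K D h) (ht : t <:+ h) : OnTrack m K D t :=
  fun s hs ↦ hh s (hs.trans ht)

lemma onTrack_cons_iff (hm : m ≤ h.length) (e : Edge V) : OnTrack m K D (e :: h) ↔
    OnTrack m K D h ∧ (isolated (e :: h) = ∅ → uncovered m (e :: h) = ∅) := by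
  refine ⟨fun ht ↦ ⟨ht.of_suffix (List.suffix_cons e h), (ht _ List.suffix_rfl).1⟩, ?_⟩
  rintro ⟨hh, hiso⟩ t ht
  obtain rfl | ht := List.suffix_cons_iff.1 ht
  · exact ⟨hiso, fun hlen ↦ absurd hlen (by simp only [List.length_cons]; omega)⟩
  · exact hh t ht

lemma OnTrack.exists_suffix (hh : OnTrack m K D h) (hm : m ≤ h.length) :
    ∃ t, t <:+ h ∧ t.length = m ∧ #(uncovered m t) ≤ K := by
  have hlen : (h.drop (h.length - m)).length = m := by rw [List.length_drop]; omega
  exact ⟨_, List.drop_suffix _ _, hlen, ((hh _ (List.drop_suffix _ _)).2 hlen).1⟩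

lemma OnTrack.card_uncovered_le (hh : OnTrack m K D h) (hm : m ≤ h.length) :
    #(uncovered m h) ≤ K := by
  obtain ⟨t, ht, -, hK⟩ := hh.exists_suffix hm
  exact (Nat.cast_le.2 (card_le_card (uncovered_anti ht))).trans hK

/-- From time `m` on, every edge meeting an uncovered vertex covers it. -/
lemma OnTrack.seenDegree_le (hh : OnTrack m K D h) (hm : m ≤ h.length) {v : V}
    (hv : v ∈ uncovered m h) : seenDegree h v ≤ D := by
  induction h with
  | nil => exact ((hh _ List.suffix_rfl).2 (Nat.le_zero.1 hm).symm).2 v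
  | cons e h ih =>
    obtain hlen | hlen := hm.eq_or_lt
    · exact ((hh _ List.suffix_rfl).2 hlen.symm).2 v
    · have hm' : m ≤ h.length := Nat.lt_succ_iff.1 hlen
      rw [uncovered_cons_of_le hm', mem_filter] at hv
      rw [seenDegree_cons, if_neg hv.2]
      exact ih (hh.of_suffix (List.suffix_cons e h)) hm' hv.1

lemma OnTrack.two_mul_card_bought_le (hh : OnTrack m K D h) (hK : 0 ≤ K) :
    2 * (#(bought m h) : ℝ) ≤ Fintype.card V + K := by
  obtain hm | hm := le_total h.length m
  · have := two_mul_card_bought_add_card_uncovered_le hm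
    have : (2 * #(bought m h) : ℝ) ≤ Fintype.card V := by norm_cast; omega
    linarith
  · obtain ⟨t, ht, hlen, htK⟩ := hh.exists_suffix hm
    have hmatching : (2 * #(bought m t) + #(uncovered m t) : ℝ) ≤ Fintype.card V := by
      exact_mod_cast two_mul_card_bought_add_card_uncovered_le hlen.le
    have hlater : (#(bought m h) + #(uncovered m h) : ℝ) ≤ #(bought m t) + #(uncovered m t) := by
      exact_mod_cast card_bought_add_card_uncovered_anti ht
    linarith [Nat.cast_nonneg (α := ℝ) #(uncovered m h)]

end OnTrack

lemma monotone_harmonic : Monotone harmonic :=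
  monotone_nat_of_le_succ fun n ↦ by
    rw [harmonic_succ]
    exact le_add_of_nonneg_right (by positivity)

lemma div_le_harmonic_sub_harmonic {a b : ℕ} (hab : a ≤ b) :
    ((b - a) / b : ℝ) ≤ harmonic b - harmonic a := by
  have hsum : (harmonic b - harmonic a : ℝ) = ∑ i ∈ Ico a b, (((i + 1 : ℕ) : ℝ))⁻¹ := by
    rw [sum_Ico_eq_sub _ hab]
    simp [harmonic]
  calc ((b - a) / b : ℝ) = #(Ico a b) • (b : ℝ)⁻¹ := by
        rw [Nat.card_Ico, nsmul_eq_mul, Nat.cast_sub hab, div_eq_mul_inv]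
    _ ≤ harmonic b - harmonic a := by
        rw [hsum]
        refine card_nsmul_le_sum _ _ _ fun i hi ↦ ?_
        gcongr
        exact (mem_Ico.1 hi).2

section WinRatio

variable {V : Type*} [DecidableEq V] [Fintype V] {m D : ℕ} {K : ℝ} {h : List (Edge V)}

open scoped Classical in
/-- The proportion of isolated vertices among the uncovered ones as long as Builder is on track;
it is `1` once all vertices are covered, and it estimates the probability of that. -/
noncomputable def winRatio (m : ℕ) (K : ℝ) (D : ℕ) (h : List (Edge V)) : ℝ :=
  if OnTrack m K D h then
    if uncovered m h = ∅ then 1 else #(isolated h) / #(uncovered m h)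
  else 0

lemma winRatio_nonneg : 0 ≤ winRatio m K D h := by
  unfold winRatio
  positivity

lemma winRatio_of_onTrack (hh : OnTrack m K D h) (hU : uncovered m h ≠ ∅) :
    winRatio m K D h = #(isolated h) / #(uncovered m h) := by
  rw [winRatio, if_pos hh, if_neg hU]

lemma winRatio_of_uncovered_eq_empty (hh : OnTrack m K D h) (hU : uncovered m h = ∅) :
    winRatio m K D h = 1 := by
  rw [winRatio, if_pos hh, if_pos hU]

lemma winRatio_of_not_onTrack (hh : ¬ OnTrack m K D h) : winRatio m K D h = 0 := if_neg hh

lemma card_isolated_div_card_uncovered_le_one (m : ℕ) (h : List (Edge V)) :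
    (#(isolated h) / #(uncovered m h) : ℝ) ≤ 1 :=
  div_le_one_of_le₀ (Nat.cast_le.2 (card_le_card (isolated_subset_uncovered m h)))
    (Nat.cast_nonneg _)

lemma winRatio_le_one : winRatio m K D h ≤ 1 := by
  unfold winRatio
  split_ifs
  exacts [le_rfl, card_isolated_div_card_uncovered_le_one m h, zero_le_one]

lemma cast_card_isolated_cons (e : Edge V) (h : List (Edge V)) :
    (#(isolated (e :: h)) : ℝ) = #(isolated h) - endsIn (isolated h) e := by
  rw [isolated_cons, eq_sub_iff_add_eq]
  exact_mod_cast card_filter_notMem_add_endsIn (isolated h) e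

lemma cast_card_uncovered_cons (hm : m ≤ h.length) (e : Edge V) :
    (#(uncovered m (e :: h)) : ℝ) = #(uncovered m h) - endsIn (uncovered m h) e := by
  rw [uncovered_cons_of_le hm, eq_sub_iff_add_eq]
  exact_mod_cast card_filter_notMem_add_endsIn (uncovered m h) e

/-- The change of the ratio `x / u` of isolated to uncovered vertices when the edge `e` covers
some of them. Division by zero makes it `0` if `e` covers all the uncovered vertices. -/
noncomputable def ratioIncrement (m : ℕ) (h : List (Edge V)) (e : Edge V) : ℝ :=
  (#(isolated h) * endsIn (uncovered m h) e - #(uncovered m h) * endsIn (isolated h) e) /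
    (#(uncovered m h) * (#(uncovered m h) - endsIn (uncovered m h) e))

lemma add_ratioIncrement_le_winRatio_cons (hm : m ≤ h.length) (hh : OnTrack m K D h)
    (hU : uncovered m h ≠ ∅) (e : Edge V) :
    winRatio m K D h + ratioIncrement m h e ≤ winRatio m K D (e :: h) := by
  have hu : (#(uncovered m h) : ℝ) ≠ 0 := by simpa using hU
  have hu' := cast_card_uncovered_cons hm e
  have hx' := cast_card_isolated_cons e h
  rw [winRatio_of_onTrack hh hU, ratioIncrement, ← hu']
  by_cases hU' : uncovered m (e :: h) = ∅
  · have hh' : OnTrack m K D (e :: h) := (onTrack_cons_iff hm e).2 ⟨hh, fun _ ↦ hU'⟩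
    rw [winRatio_of_uncovered_eq_empty hh' hU']
    simpa [hU'] using card_isolated_div_card_uncovered_le_one m h
  have hu'0 : (#(uncovered m (e :: h)) : ℝ) ≠ 0 := by simpa using hU'
  have hratio : (#(isolated h) / #(uncovered m h) : ℝ) +
      (#(isolated h) * endsIn (uncovered m h) e - #(uncovered m h) * endsIn (isolated h) e) /
        (#(uncovered m h) * #(uncovered m (e :: h))) =
      #(isolated (e :: h)) / #(uncovered m (e :: h)) := by
    rw [hx']
    field_simp
    rw [hu']
    ring
  rw [hratio]
  by_cases hh' : OnTrack m K D (e :: h)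
  · rw [winRatio_of_onTrack hh' hU']
  · have hx0 : isolated (e :: h) = ∅ := by
      by_contra hne
      exact hh' ((onTrack_cons_iff hm e).2 ⟨hh, fun h0 ↦ absurd h0 hne⟩)
    simp [winRatio_of_not_onTrack hh', hx0]

/-- Replacing the denominator `u (u - b)` of `ratioIncrement` by `u (u - 1)` makes a difference only
for the edges within the set of uncovered vertices. -/
lemma ratioIncrement_eq (m : ℕ) (h : List (Edge V)) (e : Edge V) : ratioIncrement m h e =
    (#(isolated h) * endsIn (uncovered m h) e - #(uncovered m h) * endsIn (isolated h) e) /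
        (#(uncovered m h) * (#(uncovered m h) - 1)) +
      if e ∈ edgesWithin (uncovered m h) then
        (2 * #(isolated h) - #(uncovered m h) * endsIn (isolated h) e : ℝ) *
          (1 / (#(uncovered m h) * (#(uncovered m h) - 2)) -
            1 / (#(uncovered m h) * (#(uncovered m h) - 1)))
      else 0 := by
  have hx := endsIn_mono (isolated_subset_uncovered m h) e
  simp only [ratioIncrement, mem_edgesWithin]
  obtain hb | hb | hb : endsIn (uncovered m h) e = 0 ∨ endsIn (uncovered m h) e = 1 ∨
      endsIn (uncovered m h) e = 2 := by
    have := endsIn_le_two (uncovered m h) e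
    omega
  · have ha : endsIn (isolated h) e = 0 := by omega
    simp [hb, ha]
  · simp [hb]
  · rw [hb, if_pos rfl]
    push_cast
    ring

lemma sum_edgesWithin_uncovered (hU : uncovered m h ≠ ∅) :
    ∑ e ∈ edgesWithin (uncovered m h),
      (2 * #(isolated h) - #(uncovered m h) * endsIn (isolated h) e : ℝ) = 0 := by
  have hcast : ((#(uncovered m h) - 1 : ℕ) : ℝ) = #(uncovered m h) - 1 :=
    Nat.cast_pred (card_pos.2 (nonempty_iff_ne_empty.2 hU))
  have hpairs : (2 * #(edgesWithin (uncovered m h)) : ℝ) =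
      #(uncovered m h) * (#(uncovered m h) - 1) := by
    rw [← hcast]
    exact_mod_cast two_mul_card_edgesWithin (uncovered m h)
  have hinc : ∑ e ∈ edgesWithin (uncovered m h), (endsIn (isolated h) e : ℝ) =
      #(isolated h) * (#(uncovered m h) - 1) := by
    rw [← hcast]
    exact_mod_cast sum_endsIn_edgesWithin (isolated_subset_uncovered m h)
  rw [sum_sub_distrib, sum_const, nsmul_eq_mul, ← mul_sum, hinc]
  linear_combination (#(isolated h) : ℝ) * hpairs

lemma sum_unseen_endsIn_isolated (hh : h.Nodup) :
    ∑ e ∈ unseen h, (endsIn (isolated h) e : ℝ) = #(isolated h) * (Fintype.card V - 1) := by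
  rw [sum_unseen_endsIn hh, sum_congr rfl fun v hv ↦ by rw [mem_isolated.1 hv], sum_const,
    nsmul_eq_mul, Nat.cast_zero, sub_zero]

lemma sum_ratioIncrement (hh : h.Nodup) (hU : uncovered m h ≠ ∅) :
    ∑ e ∈ unseen h, ratioIncrement m h e =
      -((#(isolated h) * ∑ v ∈ uncovered m h, (seenDegree h v : ℝ)) /
        (#(uncovered m h) * (#(uncovered m h) - 1))) := by
  simp only [ratioIncrement_eq, sum_add_distrib, ← sum_div, sum_ite_mem]
  rw [inter_eq_right.2 (edgesWithin_uncovered_subset m h), ← sum_mul,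
    sum_edgesWithin_uncovered hU, zero_mul, add_zero, sum_sub_distrib, ← mul_sum, ← mul_sum,
    sum_unseen_endsIn_isolated hh, sum_unseen_endsIn hh, sum_sub_distrib, sum_const, nsmul_eq_mul,
    ← neg_div]
  congr 1
  ring

lemma neg_le_sum_ratioIncrement (hh : h.Nodup) (hU : uncovered m h ≠ ∅)
    (hD : ∀ v ∈ uncovered m h, seenDegree h v ≤ D) :
    -(D : ℝ) ≤ ∑ e ∈ unseen h, ratioIncrement m h e := by
  have hsub := isolated_subset_uncovered m h
  have hdeg : ∑ v ∈ uncovered m h, (seenDegree h v : ℝ) ≤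
      (#(uncovered m h) - #(isolated h)) * D := by
    rw [← cast_card_sdiff hsub, ← nsmul_eq_mul, ← sum_sdiff hsub,
      sum_eq_zero (s := isolated h) fun v hv ↦ by rw [mem_isolated.1 hv, Nat.cast_zero], add_zero]
    exact sum_le_card_nsmul _ _ _ fun v hv ↦ Nat.cast_le.2 (hD v (mem_sdiff.1 hv).1)
  have hu : (1 : ℝ) ≤ #(uncovered m h) :=
    Nat.one_le_cast.2 (card_pos.2 (nonempty_iff_ne_empty.2 hU))
  have hxu : (#(isolated h) : ℝ) ≤ #(uncovered m h) := Nat.cast_le.2 (card_le_card hsub)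
  have hquad : (#(isolated h) * (#(uncovered m h) - #(isolated h)) : ℝ) ≤
      #(uncovered m h) * (#(uncovered m h) - 1) := by
    obtain hx | hx := (#(isolated h)).eq_zero_or_pos
    · rw [hx, Nat.cast_zero, zero_mul]
      exact mul_nonneg (by positivity) (by linarith)
    · have hx1 : (1 : ℝ) ≤ #(isolated h) := Nat.one_le_cast.2 hx
      gcongr
  rw [sum_ratioIncrement hh hU, neg_le_neg_iff]
  refine div_le_of_le_mul₀ (mul_nonneg (by positivity) (by linarith)) (by positivity) ?_
  calc (#(isolated h) * ∑ v ∈ uncovered m h, (seenDegree h v : ℝ))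
      ≤ #(isolated h) * ((#(uncovered m h) - #(isolated h)) * D) := by gcongr
    _ ≤ D * (#(uncovered m h) * (#(uncovered m h) - 1)) := by
      nlinarith [Nat.cast_nonneg (α := ℝ) D]

lemma OnTrack.card_isolated_div_le_winRatio (hh : OnTrack m K D h) (hm : m ≤ h.length) :
    #(isolated h) / K ≤ winRatio m K D h := by
  by_cases hU : uncovered m h = ∅
  · have hx : isolated h = ∅ := subset_empty.1 (hU ▸ isolated_subset_uncovered m h)
    simp [hx, winRatio_nonneg]
  · have hu : (0 : ℝ) < #(uncovered m h) :=
      Nat.cast_pos.2 (card_pos.2 (nonempty_iff_ne_empty.2 hU))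
    rw [winRatio_of_onTrack hh hU]
    gcongr
    exact hh.card_uncovered_le hm

variable {κ : ℝ}

/-- The harmonic number of `#(uncovered m h)` decreases by about as much as the ratio of isolated to
uncovered vertices can drop on average, which makes this a submartingale. -/
noncomputable def potential (m : ℕ) (K : ℝ) (D : ℕ) (κ : ℝ) (h : List (Edge V)) : ℝ :=
  winRatio m K D h - κ * harmonic #(uncovered m h)

lemma potential_add_le_potential_cons (hκ : 0 ≤ κ) (hm : m ≤ h.length) (hh : OnTrack m K D h)
    (hU : uncovered m h ≠ ∅) (e : Edge V) :
    potential m K D κ h + (ratioIncrement m h e +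
      κ * (endsIn (uncovered m h) e / #(uncovered m h))) ≤ potential m K D κ (e :: h) := by
  have hwin := add_ratioIncrement_le_winRatio_cons hm hh hU e
  have hharm := div_le_harmonic_sub_harmonic (card_le_card (uncovered_cons_subset m h e))
  rw [cast_card_uncovered_cons hm, sub_sub_cancel] at hharm
  unfold potential
  linarith [mul_le_mul_of_nonneg_left hharm hκ]

lemma expect_potential_cons_of_onTrack (hκ : 0 ≤ κ)
    (hDκ : D ≤ κ * (Fintype.card V - 1 - D)) (hnodup : h.Nodup) (hne : (unseen h).Nonempty)
    (hm : m ≤ h.length) (hh : OnTrack m K D h) (hU : uncovered m h ≠ ∅) :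
    potential m K D κ h ≤ 𝔼 e ∈ unseen h, potential m K D κ (e :: h) := by
  have hdeg (v : V) (hv : v ∈ uncovered m h) : seenDegree h v ≤ D := hh.seenDegree_le hm hv
  have hu : (0 : ℝ) < #(uncovered m h) := Nat.cast_pos.2 (card_pos.2 (nonempty_iff_ne_empty.2 hU))
  have hgain : (D : ℝ) ≤
      ∑ e ∈ unseen h, κ * (endsIn (uncovered m h) e / #(uncovered m h) : ℝ) := by
    rw [← mul_sum, ← sum_div, sum_unseen_endsIn hnodup]
    refine hDκ.trans (mul_le_mul_of_nonneg_left ?_ hκ)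
    rw [le_div_iff₀' hu, ← nsmul_eq_mul]
    exact card_nsmul_le_sum _ _ _ fun v hv ↦ sub_le_sub_left (Nat.cast_le.2 (hdeg v hv)) _
  have hdrift : 0 ≤ 𝔼 e ∈ unseen h, (ratioIncrement m h e +
      κ * (endsIn (uncovered m h) e / #(uncovered m h))) := by
    rw [expect_eq_sum_div_card, sum_add_distrib]
    exact div_nonneg (by linarith [neg_le_sum_ratioIncrement hnodup hU hdeg]) (Nat.cast_nonneg _)
  calc potential m K D κ h
      ≤ 𝔼 e ∈ unseen h, (potential m K D κ h + (ratioIncrement m h e +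
          κ * (endsIn (uncovered m h) e / #(uncovered m h)))) := by
        rw [expect_add_distrib, expect_const hne]
        exact le_add_of_nonneg_right hdrift
    _ ≤ 𝔼 e ∈ unseen h, potential m K D κ (e :: h) :=
        expect_le_expect fun e _ ↦ potential_add_le_potential_cons hκ hm hh hU e

lemma le_expect_potential_cons (hκ : 0 ≤ κ)
    (hDκ : D ≤ κ * (Fintype.card V - 1 - D)) (hnodup : h.Nodup) (hne : (unseen h).Nonempty)
    (hm : m ≤ h.length) :
    potential m K D κ h ≤ 𝔼 e ∈ unseen h, potential m K D κ (e :: h) := by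
  by_cases hgoing : OnTrack m K D h ∧ uncovered m h ≠ ∅
  · exact expect_potential_cons_of_onTrack hκ hDκ hnodup hne hm hgoing.1 hgoing.2
  refine le_expect hne fun e _ ↦ ?_
  have hwin : winRatio m K D h ≤ winRatio m K D (e :: h) := by
    by_cases hh : OnTrack m K D h
    · have hU : uncovered m h = ∅ := by tauto
      have hU' : uncovered m (e :: h) = ∅ :=
        subset_empty.1 (hU ▸ uncovered_cons_subset m h e)
      rw [winRatio_of_uncovered_eq_empty ((onTrack_cons_iff hm e).2 ⟨hh, fun _ ↦ hU'⟩) hU']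
      exact winRatio_le_one
    · rw [winRatio_of_not_onTrack hh]
      exact winRatio_nonneg
  have hharm : (harmonic #(uncovered m (e :: h)) : ℝ) ≤ harmonic #(uncovered m h) :=
    Rat.cast_le.2 (monotone_harmonic (card_le_card (uncovered_cons_subset m h e)))
  exact sub_le_sub hwin (mul_le_mul_of_nonneg_left hharm hκ)

end WinRatio

/-! ### Probability of staying on track -/

section Success

variable {V : Type*} [DecidableEq V] [Fintype V] {m D : ℕ} {K κ : ℝ} {h : List (Edge V)}

lemma isolated_eq_empty_or_lt_of_not_onTrack (hm : h.length = m) (hh : ¬ OnTrack m K D h) :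
    isolated h = ∅ ∨ K < #(uncovered m h) ∨ ∃ v, D < seenDegree h v := by
  simp only [OnTrack, not_forall] at hh
  obtain ⟨t, ht, hfail⟩ := hh
  rw [not_and_or] at hfail
  obtain hstuck | hbad := hfail
  · have hempty : isolated t = ∅ := by tauto
    exact Or.inl (subset_empty.1 (hempty ▸ isolated_anti ht))
  · obtain rfl : t = h := ht.eq_of_length (by rw [hm]; tauto)
    right
    by_contra! hgood
    exact hbad fun _ ↦ hgood

lemma le_winRatio_of_length_eq {δ : ℝ} (hK : 0 < K) (hδ : 0 ≤ δ) (hm : h.length = m) :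
    #(isolated h) / K - Fintype.card V / K *
        (excess δ K #(uncovered m h) + degreeGF 2 h / 2 ^ D) ≤ winRatio m K D h := by
  have hexc := excess_nonneg δ K #(uncovered m h)
  have hgf : 0 ≤ degreeGF 2 h / 2 ^ D := div_nonneg (degreeGF_nonneg zero_le_two h) (by positivity)
  by_cases hh : OnTrack m K D h
  · calc _ ≤ #(isolated h) / K := sub_le_self _ (by positivity)
      _ ≤ winRatio m K D h := hh.card_isolated_div_le_winRatio hm.ge
  rw [winRatio_of_not_onTrack hh, sub_nonpos]
  obtain hx | hbad := isolated_eq_empty_or_lt_of_not_onTrack hm hh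
  · rw [hx, card_empty, Nat.cast_zero, zero_div]
    positivity
  have hone : 1 ≤ excess δ K #(uncovered m h) + degreeGF 2 h / 2 ^ D := by
    obtain hlt | ⟨v, hv⟩ := hbad
    · linarith [one_le_excess hδ hlt]
    · linarith [(one_le_div (by positivity)).2 (pow_le_degreeGF one_le_two hv.le)]
  calc #(isolated h) / K ≤ Fintype.card V / K := by gcongr; exact card_le_univ _
    _ ≤ Fintype.card V / K * (excess δ K #(uncovered m h) + degreeGF 2 h / 2 ^ D) :=
      le_mul_of_one_le_right (by positivity) hone

variable {N : ℕ} [Nonempty (Fin N ≃ Edge V)]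

open scoped Classical in
lemma expect_potential_le_expect_onTrack (hκ : 0 ≤ κ) (hDκ : D ≤ κ * (Fintype.card V - 1 - D))
    (hmN : m ≤ N) :
    𝔼 σ : Fin N ≃ Edge V, potential m K D κ (history σ m) ≤
      𝔼 σ : Fin N ≃ Edge V, if OnTrack m K D (history σ N) then (1 : ℝ) else 0 := by
  have hmono : 𝔼 σ : Fin N ≃ Edge V, potential m K D κ (history σ m) ≤
      𝔼 σ : Fin N ≃ Edge V, potential m K D κ (history σ N) := by
    have key := pow_mul_expect_history_le (N := N) (F := potential (V := V) m K D κ) zero_le_one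
      (i := m) (k := N - m) (by omega) fun h hh hm hN ↦ by
        have hpos := sub_lt_card_unseen (N := N) hh (hN.trans_eq (Nat.add_sub_of_le hmN))
        rw [sub_self, Nat.cast_pos, card_pos] at hpos
        simpa only [one_mul] using le_expect_potential_cons hκ hDκ hh hpos hm
    simpa only [one_pow, one_mul, Nat.add_sub_of_le hmN] using key
  refine hmono.trans (expect_le_expect fun σ _ ↦ ?_)
  have hharm : 0 ≤ κ * (harmonic #(uncovered m (history σ N)) : ℝ) :=
    mul_nonneg hκ (Rat.cast_nonneg.2 (harmonic_zero ▸ monotone_harmonic (Nat.zero_le _)))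
  refine (sub_le_self _ hharm).trans ?_
  split_ifs with hh
  · exact winRatio_le_one
  · exact (winRatio_of_not_onTrack hh).le

/-- Markov's inequality at time `m` removes the histories that are off track. -/
lemma le_expect_potential {δ p t : ℝ} (hκ : 0 ≤ κ) (hδ : 0 ≤ δ) (hp0 : 0 ≤ p) (hK : 1 ≤ K)
    (hp : p * (Fintype.card V * (Fintype.card V - 1)) ≤ K * (K - 1))
    (ht : 0 ≤ t) (ht1 : t ≤ 1) (hmN : m ≤ N) (htN : (Fintype.card V : ℝ) - 1 ≤ t * (N - m)) :
    Fintype.card V / K * ((1 - t) ^ m -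
        (Real.exp (-p * (1 - Real.exp (-2 * δ))) ^ m * Real.exp (δ * (Fintype.card V - K)) +
          (1 + t) ^ m * Fintype.card V / 2 ^ D)) - κ * harmonic (Fintype.card V) ≤
      𝔼 σ : Fin N ≃ Edge V, potential m K D κ (history σ m) := by
  have hK0 : 0 < K := by linarith
  have hpath (σ : Fin N ≃ Edge V) : (#(isolated (history σ m)) / K - Fintype.card V / K *
      (excess δ K #(uncovered m (history σ m)) + degreeGF 2 (history σ m) / 2 ^ D)) -
      κ * harmonic (Fintype.card V) ≤ potential m K D κ (history σ m) := by
    refine sub_le_sub (le_winRatio_of_length_eq hK0 hδ (length_history σ hmN))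
      (mul_le_mul_of_nonneg_left (Rat.cast_le.2 (monotone_harmonic (card_le_univ _))) hκ)
  refine le_trans ?_ (expect_le_expect fun σ _ ↦ hpath σ)
  rw [expect_sub_distrib, expect_sub_distrib, ← mul_expect, expect_add_distrib, ← expect_div,
    ← expect_div, Fintype.expect_const]
  have hisolated := le_expect_card_isolated ht ht1 hmN htN
  have hexcess := expect_excess_le hδ hp0 hK hp hmN
  have hdegree := expect_degreeGF_le_pow_mul_card one_le_two ht hmN htN
  rw [show (2 : ℝ) - 1 = 1 by norm_num, one_mul] at hdegree
  calc _ = (1 - t) ^ m * Fintype.card V / K - Fintype.card V / K *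
        (Real.exp (-p * (1 - Real.exp (-2 * δ))) ^ m * Real.exp (δ * (Fintype.card V - K)) +
          (1 + t) ^ m * Fintype.card V / 2 ^ D) - κ * harmonic (Fintype.card V) := by ring
    _ ≤ _ := by gcongr

end Success

/-! ### Strategies for the random graph process -/

section Bridge

variable {n m : ℕ} (σ : Ord n) {i : ℕ}

/-- Builder's strategy: buy by the rule `Buys` with a matching phase of `m` edges. Diagonal elements
of `Sym2`, which never occur in a revealed sequence, are skipped. -/
def greedyStrategy (m : ℕ) : Strategy n := fun l ↦
  match l.reverse.filterMap fun e ↦ if he : e.IsDiag then none else some ⟨e, he⟩ with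
  | [] => false
  | e :: h => decide (Buys m h e)

lemma greedyStrategy_eq (m : ℕ) (e : EdgeType n) (h : List (EdgeType n)) :
    greedyStrategy m ((e :: h).map Subtype.val).reverse = decide (Buys m h e) := by
  have hdecode : (fun a : EdgeType n ↦ if ha : a.1.IsDiag then none else some ⟨a.1, ha⟩) =
      some := funext fun a ↦ dif_neg a.2
  simp only [greedyStrategy, List.reverse_reverse, List.filterMap_map, Function.comp_def, hdecode,
    List.filterMap_some]

variable {σ}

lemma prefixList_eq (hi : i ≤ numEdges n) :
    prefixList σ i = ((history σ i).map Subtype.val).reverse := by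
  induction i with
  | zero => simp [prefixList]
  | succ i ih =>
    have hlt : i < numEdges n := hi
    rw [history_succ σ hlt, List.map_cons, List.reverse_cons, ← ih hlt.le]
    simp [prefixList, List.range_succ, hlt]

lemma buy_greedyStrategy (hi : i ≤ numEdges n) :
    buy (greedyStrategy m) σ i = (bought m (history σ i)).image Subtype.val := by
  induction i with
  | zero => simp [buy, bought]
  | succ i ih =>
    have hlt : i < numEdges n := hi
    simp only [buy, dif_pos hlt, prefixList_eq hi, history_succ σ hlt, greedyStrategy_eq, bought,
      decide_eq_true_eq, ih hlt.le]
    split_ifs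
    exacts [(image_insert _ _ _).symm, rfl]

lemma mem_procEdges {e : Sym2 (Fin n)} :
    e ∈ procEdges σ i ↔ ∃ a ∈ history σ i, a.1 = e := by
  simp only [procEdges, mem_image, mem_filter, mem_univ, true_and, mem_history]
  exact ⟨fun ⟨j, hj, he⟩ ↦ ⟨σ j, by simpa using hj, he⟩,
    fun ⟨a, ha, he⟩ ↦ ⟨σ.symm a, ha, by simpa using he⟩⟩

lemma one_le_deg_iff {S : Finset (Sym2 (Fin n))} {v : Fin n} : 1 ≤ deg S v ↔ ∃ e ∈ S, v ∈ e := by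
  simp [deg, Nat.one_le_iff_ne_zero, filter_eq_empty_iff]

lemma forall_one_le_deg_procEdges_iff :
    (∀ v, 1 ≤ deg (procEdges σ i) v) ↔ isolated (history σ i) = ∅ := by
  simp [one_le_deg_iff, mem_procEdges, eq_empty_iff_forall_notMem, mem_isolated,
    seenDegree_eq_zero]

lemma isolated_history_numEdges (hn : 2 ≤ n) : isolated (history σ (numEdges n)) = ∅ := by
  refine eq_empty_of_forall_notMem fun v hv ↦ ?_
  have hpos : 0 < #{e : EdgeType n | v ∈ e.1} := by
    rw [card_filter_mem_edge, Fintype.card_fin]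
    omega
  obtain ⟨e, he⟩ := card_pos.1 hpos
  exact seenDegree_eq_zero.1 (mem_isolated.1 hv) e (mem_history.2 (σ.symm e).isLt)
    (by simpa using he)

lemma tau_one_le (hn : 2 ≤ n) : tau 1 σ ≤ numEdges n :=
  Nat.sInf_le (forall_one_le_deg_procEdges_iff.2 (isolated_history_numEdges hn))

lemma isolated_history_tau_one (hn : 2 ≤ n) : isolated (history σ (tau 1 σ)) = ∅ := by
  have hne : {k | ∀ v, 1 ≤ deg (procEdges σ k) v}.Nonempty :=
    ⟨numEdges n, forall_one_le_deg_procEdges_iff.2 (isolated_history_numEdges hn)⟩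
  exact forall_one_le_deg_procEdges_iff.1 (Nat.sInf_mem hne)

lemma OnTrack.greedyStrategy_wins {K : ℝ} {D : ℕ} (hn : 2 ≤ n) (hK : 0 ≤ K)
    (hσ : OnTrack m K D (history σ (numEdges n))) :
    2 * (#(buy (greedyStrategy m) σ (tau 1 σ)) : ℝ) ≤ n + K ∧
      ∀ v, 1 ≤ deg (buy (greedyStrategy m) σ (tau 1 σ)) v := by
  have hsuffix := history_suffix σ (tau_one_le (σ := σ) hn)
  rw [buy_greedyStrategy (tau_one_le hn)]
  constructor
  · rw [card_image_of_injective _ Subtype.val_injective]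
    simpa using (hσ.of_suffix hsuffix).two_mul_card_bought_le hK
  · intro v
    have hcovered := (hσ _ hsuffix).1 (isolated_history_tau_one hn)
    obtain ⟨e, he, hv⟩ := exists_mem_bought (hcovered ▸ notMem_empty v)
    exact one_le_deg_iff.2 ⟨e.1, mem_image_of_mem _ he, hv⟩

instance : Nonempty (Ord n) :=
  Fintype.card_eq.1 (by
    rw [Fintype.card_fin, Sym2.card_subtype_not_diag, Fintype.card_fin, Nat.choose_two_right,
      numEdges])

open scoped Classical in
lemma expect_eq_Pr (p : Ord n → Prop) : 𝔼 σ, (if p σ then (1 : ℝ) else 0) = Pr p := by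
  rw [Fintype.expect_eq_sum_div_card, sum_boole, Pr]

lemma Pr_mono {p q : Ord n → Prop} (hpq : ∀ σ, p σ → q σ) : Pr p ≤ Pr q := by
  classical
  refine div_le_div_of_nonneg_right (Nat.cast_le.2 (card_le_card fun σ hσ ↦ ?_)) (Nat.cast_nonneg _)
  rw [mem_filter] at hσ ⊢
  exact ⟨hσ.1, hpq σ hσ.2⟩

end Bridge

/-! ### Asymptotics -/

section Asymptotics

open scoped Topology
open Asymptotics

lemma tendsto_one_add_pow_exp {f : ℕ → ℝ} {k : ℕ → ℕ} {c : ℝ} (hf : Tendsto f atTop (𝓝 0))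
    (hkf : Tendsto (fun n ↦ k n * f n) atTop (𝓝 c)) :
    Tendsto (fun n ↦ (1 + f n) ^ k n) atTop (𝓝 (Real.exp c)) := by
  have hf1 : Tendsto (fun n ↦ 1 + f n) atTop (𝓝 1) := by simpa using hf.const_add 1
  have hslope : Tendsto (fun n ↦ dslope Real.log 1 (1 + f n)) atTop (𝓝 1) := by
    have hcont : ContinuousAt (dslope Real.log 1) 1 :=
      continuousAt_dslope_same.2 (Real.differentiableAt_log one_ne_zero)
    simpa [Function.comp_def] using hcont.tendsto.comp hf1
  have hlog : Tendsto (fun n ↦ k n * Real.log (1 + f n)) atTop (𝓝 c) := by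
    refine (mul_one c ▸ hkf.mul hslope).congr fun n ↦ ?_
    have hdslope := sub_smul_dslope Real.log 1 (1 + f n)
    rw [add_sub_cancel_left, smul_eq_mul, Real.log_one, sub_zero] at hdslope
    rw [mul_assoc, hdslope]
  refine ((Real.continuous_exp.tendsto c).comp hlog).congr' ?_
  filter_upwards [hf1.eventually_const_lt one_pos] with n hn
  rw [Function.comp_apply, Real.exp_nat_mul, Real.exp_log hn]

lemma isBigO_log_clog : (fun n : ℕ ↦ (Nat.clog 2 n : ℝ)) =O[atTop] fun n : ℕ ↦ Real.log n := by
  refine IsBigO.of_bound (2 / Real.log 2) ?_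
  filter_upwards [eventually_ge_atTop 2] with n hn
  have hlog2 : 0 < Real.log 2 := Real.log_pos one_lt_two
  have hlog : Real.log 2 ≤ Real.log n := Real.log_le_log two_pos (by exact_mod_cast hn)
  rw [Real.norm_of_nonneg (Nat.cast_nonneg _), Real.norm_of_nonneg (hlog2.le.trans hlog)]
  calc (Nat.clog 2 n : ℝ) = ⌈Real.logb 2 n⌉₊ := by
        exact_mod_cast (Real.natCeil_logb_natCast 2 n).symm
    _ ≤ Real.logb 2 n + 1 :=
        (Nat.ceil_lt_add_one (div_nonneg (hlog2.le.trans hlog) hlog2.le)).le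
    _ ≤ 2 / Real.log 2 * Real.log n := by
        rw [← Real.log_div_log, div_add_one hlog2.ne', div_mul_eq_mul_div]
        gcongr
        linarith

lemma isBigO_harmonic_log :
    (fun n : ℕ ↦ (harmonic n : ℝ)) =O[atTop] fun n : ℕ ↦ Real.log n := by
  have hlog : Tendsto (fun n : ℕ ↦ Real.log n) atTop atTop :=
    Real.tendsto_log_atTop.comp tendsto_natCast_atTop_atTop
  refine IsBigO.of_bound 2 ?_
  filter_upwards [hlog.eventually_ge_atTop 1] with n hn
  have h0 : (0 : ℝ) ≤ harmonic n := Rat.cast_nonneg.2 (harmonic_zero ▸ monotone_harmonic n.zero_le)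
  rw [Real.norm_of_nonneg h0, Real.norm_of_nonneg (by linarith)]
  linarith [harmonic_le_one_add_log n]

lemma isLittleO_log_pow_natCast (j : ℕ) :
    (fun n : ℕ ↦ Real.log n ^ j) =o[atTop] fun n : ℕ ↦ (n : ℝ) :=
  Real.isLittleO_pow_log_id_atTop.comp_tendsto tendsto_natCast_atTop_atTop

lemma tendsto_clog_div : Tendsto (fun n : ℕ ↦ (Nat.clog 2 n : ℝ) / n) atTop (𝓝 0) := by
  have hlog : (fun n : ℕ ↦ Real.log n) =o[atTop] fun n : ℕ ↦ (n : ℝ) := by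
    simpa using isLittleO_log_pow_natCast 1
  exact (isBigO_log_clog.trans_isLittleO hlog).tendsto_div_nhds_zero

lemma tendsto_clog_mul_harmonic_div :
    Tendsto (fun n : ℕ ↦ (Nat.clog 2 n * harmonic n : ℝ) / n) atTop (𝓝 0) := by
  refine IsLittleO.tendsto_div_nhds_zero (IsBigO.trans_isLittleO ?_ (isLittleO_log_pow_natCast 2))
  simpa only [sq] using isBigO_log_clog.mul isBigO_harmonic_log

end Asymptotics

section Parameters

open scoped Topology

/-- The length of the matching phase; `θ` is slightly smaller than `1`. -/
noncomputable def matchingRounds (C θ : ℝ) (n : ℕ) : ℕ := ⌈θ * C / 2 * n⌉₊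

lemma exists_lt_sq {a : ℝ} (ha : a < 1) : ∃ θ : ℝ, 0 < θ ∧ θ < 1 ∧ a < θ ^ 2 := by
  have hb : max a 0 < 1 := max_lt ha one_pos
  refine ⟨(1 + max a 0) / 2, by positivity, by linarith, (le_max_left a 0).trans_lt ?_⟩
  nlinarith

/-- To first order in `δ`, the claim is `δ * a < δ * b`. -/
lemma exists_mul_lt_mul_one_sub_exp {a b : ℝ} (ha : a < 1) (hb : 0 < b) (hab : a < b) :
    ∃ δ : ℝ, 0 < δ ∧ δ * a < b / 2 * (1 - Real.exp (-2 * δ)) := by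
  obtain ⟨δ, hδ, hδab⟩ : ∃ δ : ℝ, 0 < δ ∧ a * (1 + 2 * δ) < b :=
    ⟨(b - a) / 4, by linarith, by nlinarith⟩
  have hexp : Real.exp (-2 * δ) ≤ (1 + 2 * δ)⁻¹ := by
    rw [neg_mul, Real.exp_neg]
    exact inv_anti₀ (by linarith) (by linarith [Real.add_one_le_exp (2 * δ)])
  refine ⟨δ, hδ, ?_⟩
  calc δ * a < δ * (b / (1 + 2 * δ)) := by
        gcongr
        rwa [lt_div_iff₀ (by linarith)]
    _ = b / 2 * (1 - (1 + 2 * δ)⁻¹) := by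
        field_simp
        ring
    _ ≤ b / 2 * (1 - Real.exp (-2 * δ)) := by gcongr

variable {C θ : ℝ}

lemma tendsto_matchingRounds_mul (hC : 0 < C) (hθ : 0 < θ) :
    Tendsto (fun n : ℕ ↦ (matchingRounds C θ n : ℝ) * (2 / (θ * n))) atTop (𝓝 C) := by
  have hceil := (tendsto_nat_ceil_mul_div_atTop (a := θ * C / 2) (by positivity)).comp
    (tendsto_natCast_atTop_atTop (R := ℝ))
  have hlim : θ * C / 2 * (2 / θ) = C := by field_simp
  refine (hlim ▸ hceil.mul_const (2 / θ)).congr fun n ↦ ?_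
  simp only [Function.comp_apply, matchingRounds]
  ring

lemma tendsto_two_div_mul_natCast (θ : ℝ) : Tendsto (fun n : ℕ ↦ 2 / (θ * n)) atTop (𝓝 0) := by
  simpa only [div_div] using tendsto_const_div_atTop_nhds_zero_nat (2 / θ)

lemma tendsto_one_sub_pow_matchingRounds (hC : 0 < C) (hθ : 0 < θ) :
    Tendsto (fun n : ℕ ↦ (1 - 2 / (θ * n)) ^ matchingRounds C θ n) atTop (𝓝 (Real.exp (-C))) := by
  simp only [sub_eq_add_neg]
  refine tendsto_one_add_pow_exp (by simpa using (tendsto_two_div_mul_natCast θ).neg) ?_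
  simpa only [mul_neg] using (tendsto_matchingRounds_mul hC hθ).neg

lemma tendsto_one_add_pow_matchingRounds (hC : 0 < C) (hθ : 0 < θ) :
    Tendsto (fun n : ℕ ↦ (1 + 2 / (θ * n)) ^ matchingRounds C θ n) atTop (𝓝 (Real.exp C)) :=
  tendsto_one_add_pow_exp (tendsto_two_div_mul_natCast θ) (tendsto_matchingRounds_mul hC hθ)

lemma cast_numEdges (n : ℕ) : (numEdges n : ℝ) = n * (n - 1) / 2 := by
  rw [numEdges, ← Nat.choose_two_right, Nat.cast_choose_two]

lemma eventually_natCast_sub_one_le_mul_unseen (hC : 0 < C) (hθ : 0 < θ) (hθ1 : θ < 1) :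
    ∀ᶠ n : ℕ in atTop, (n : ℝ) - 1 ≤ 2 / (θ * n) * (numEdges n - matchingRounds C θ n) := by
  have hgap : Tendsto (fun n : ℕ ↦ ((n : ℝ) - 1) * (θ⁻¹ - 1)) atTop atTop :=
    (tendsto_atTop_add_const_right _ (-1) tendsto_natCast_atTop_atTop).atTop_mul_const
      (sub_pos.2 ((one_lt_inv₀ hθ).2 hθ1))
  filter_upwards [hgap.eventually_ge_atTop (C + 1), eventually_gt_atTop 0,
    (tendsto_matchingRounds_mul hC hθ).eventually_le_const (lt_add_one C)] with n hn hn0 hm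
  calc (n : ℝ) - 1 ≤ ((n : ℝ) - 1) * θ⁻¹ - matchingRounds C θ n * (2 / (θ * n)) := by linarith
    _ = 2 / (θ * n) * (numEdges n - matchingRounds C θ n) := by
        rw [cast_numEdges]
        field_simp

lemma eventually_matchingRounds_le (hC : 0 < C) (hθ : 0 < θ) (hθ1 : θ < 1) :
    ∀ᶠ n : ℕ in atTop, matchingRounds C θ n ≤ numEdges n := by
  filter_upwards [eventually_natCast_sub_one_le_mul_unseen hC hθ hθ1, eventually_gt_atTop 0]
    with n hn hn0
  have hn1 : (1 : ℝ) ≤ n := by exact_mod_cast hn0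
  have hnonneg := nonneg_of_mul_nonneg_right ((sub_nonneg.2 hn1).trans hn) (by positivity)
  exact_mod_cast sub_nonneg.1 hnonneg

lemma eventually_density_le (hC : 0 < C) (hθ : 0 < θ) (hθ1 : θ < 1) :
    ∀ᶠ n : ℕ in atTop, θ / C * (n * (n - 1)) ≤ n / √C * (n / √C - 1) := by
  filter_upwards [tendsto_natCast_atTop_atTop.eventually_ge_atTop (√C / (1 - θ))] with n hn
  rw [div_le_iff₀ (sub_pos.2 hθ1)] at hn
  have hdiff : n / √C * (n / √C - 1) - θ / C * (n * (n - 1)) =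
      n / C * (n * (1 - θ) - √C + θ) := by
    have hsqrt : 0 < √C := Real.sqrt_pos.2 hC
    rw [← Real.sq_sqrt hC.le, Real.sqrt_sq hsqrt.le]
    field_simp
    ring
  rw [← sub_nonneg, hdiff]
  exact mul_nonneg (by positivity) (by linarith)

lemma tendsto_excess_bound {δ : ℝ} (hC : 0 < C) (hθ : 0 ≤ θ) (hδ0 : 0 ≤ δ)
    (hδ : δ * (1 - (√C)⁻¹) < θ ^ 2 / 2 * (1 - Real.exp (-2 * δ))) :
    Tendsto (fun n : ℕ ↦ Real.exp (-(θ / C) * (1 - Real.exp (-2 * δ))) ^ matchingRounds C θ n *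
      Real.exp (δ * (n - n / √C))) atTop (𝓝 0) := by
  have hq : 0 ≤ 1 - Real.exp (-2 * δ) := by
    rw [sub_nonneg, Real.exp_le_one_iff]
    linarith
  have hlim : Tendsto (fun n : ℕ ↦ Real.exp
      (-(θ ^ 2 / 2 * (1 - Real.exp (-2 * δ)) - δ * (1 - (√C)⁻¹)) * n)) atTop (𝓝 0) :=
    Real.tendsto_exp_atBot.comp (tendsto_natCast_atTop_atTop.const_mul_atTop_of_neg (by linarith))
  refine squeeze_zero (fun n ↦ by positivity) (fun n ↦ ?_) hlim
  have hm : θ * C / 2 * n ≤ matchingRounds C θ n := Nat.le_ceil _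
  rw [← Real.exp_nat_mul, ← Real.exp_add, Real.exp_le_exp]
  calc (matchingRounds C θ n : ℝ) * (-(θ / C) * (1 - Real.exp (-2 * δ))) + δ * (n - n / √C)
      = -(matchingRounds C θ n * (θ / C * (1 - Real.exp (-2 * δ)))) + δ * (n - n / √C) := by ring
    _ ≤ -(θ * C / 2 * n * (θ / C * (1 - Real.exp (-2 * δ)))) + δ * (n - n / √C) := by gcongr
    _ = -(θ ^ 2 / 2 * (1 - Real.exp (-2 * δ)) - δ * (1 - (√C)⁻¹)) * n := by
        field_simp
        ring

/-- The largest number of revealed edges at a vertex that Builder tolerates when the matching phase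
ends: about `2 * log₂ n`, so that `n ^ 2 ≤ 2 ^ degreeCap n`. -/
def degreeCap (n : ℕ) : ℕ := 2 * Nat.clog 2 n

lemma sq_le_two_pow_degreeCap (n : ℕ) : (n : ℝ) ^ 2 ≤ 2 ^ degreeCap n := by
  rw [degreeCap, mul_comm, pow_mul]
  gcongr
  exact_mod_cast Nat.le_pow_clog one_lt_two n

lemma tendsto_degree_bound (hC : 0 < C) (hθ : 0 < θ) :
    Tendsto (fun n : ℕ ↦ (1 + 2 / (θ * n)) ^ matchingRounds C θ n * n / 2 ^ degreeCap n)
      atTop (𝓝 0) := by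
  have hlim := (tendsto_one_add_pow_matchingRounds hC hθ).mul
    (tendsto_inv_atTop_nhds_zero_nat (𝕜 := ℝ))
  rw [mul_zero] at hlim
  refine squeeze_zero (fun n ↦ by positivity) (fun n ↦ ?_) hlim
  rw [mul_div_assoc]
  gcongr
  obtain rfl | hn := n.eq_zero_or_pos
  · simp
  rw [div_le_iff₀ (by positivity), inv_mul_eq_div, le_div_iff₀ (by positivity), ← sq]
  exact sq_le_two_pow_degreeCap n

lemma eventually_degreeCap_le :
    ∀ᶠ n : ℕ in atTop, (degreeCap n : ℝ) ≤ 2 * degreeCap n / n * (n - 1 - degreeCap n) := by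
  have hcap : Tendsto (fun n : ℕ ↦ (degreeCap n : ℝ) / n + 1 / n) atTop (𝓝 0) := by
    simpa [degreeCap, mul_div_assoc] using
      (tendsto_clog_div.const_mul 2).add tendsto_inv_atTop_nhds_zero_nat
  filter_upwards [hcap.eventually_le_const one_half_pos, eventually_gt_atTop 0] with n hn hn0
  have hfactor : 2 * (degreeCap n : ℝ) / n * (n - 1 - degreeCap n) =
      degreeCap n * (2 * (1 - (degreeCap n / n + 1 / n))) := by
    field_simp
    ring
  rw [hfactor]
  exact le_mul_of_one_le_right (Nat.cast_nonneg _) (by linarith)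

lemma tendsto_degreeCap_div_mul_harmonic :
    Tendsto (fun n : ℕ ↦ 2 * degreeCap n / n * (harmonic n : ℝ)) atTop (𝓝 0) := by
  refine (mul_zero (4 : ℝ) ▸ tendsto_clog_mul_harmonic_div.const_mul 4).congr fun n ↦ ?_
  rw [degreeCap]
  push_cast
  ring

/-- The lower bound on the success probability supplied by `le_expect_potential` for the parameters
chosen above. -/
noncomputable def guarantee (C θ δ : ℝ) (n : ℕ) : ℝ :=
  n / (n / √C) * ((1 - 2 / (θ * n)) ^ matchingRounds C θ n -
    (Real.exp (-(θ / C) * (1 - Real.exp (-2 * δ))) ^ matchingRounds C θ n *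
        Real.exp (δ * (n - n / √C)) +
      (1 + 2 / (θ * n)) ^ matchingRounds C θ n * n / 2 ^ degreeCap n)) -
    2 * degreeCap n / n * harmonic n

lemma tendsto_guarantee {δ : ℝ} (hC : 0 < C) (hθ : 0 < θ) (hδ0 : 0 ≤ δ)
    (hδ : δ * (1 - (√C)⁻¹) < θ ^ 2 / 2 * (1 - Real.exp (-2 * δ))) :
    Tendsto (guarantee C θ δ) atTop (𝓝 (√C * Real.exp (-C))) := by
  have hratio : Tendsto (fun n : ℕ ↦ (n : ℝ) / (n / √C)) atTop (𝓝 √C) := by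
    refine tendsto_const_nhds.congr' ?_
    filter_upwards [eventually_ne_atTop 0] with n hn
    rw [div_div_cancel₀ (Nat.cast_ne_zero.2 hn)]
  unfold guarantee
  simpa only [add_zero, sub_zero] using (hratio.mul
    ((tendsto_one_sub_pow_matchingRounds hC hθ).sub ((tendsto_excess_bound hC hθ.le hδ0 hδ).add
      (tendsto_degree_bound hC hθ)))).sub tendsto_degreeCap_div_mul_harmonic

lemma eventually_guarantee_le_Pr {δ : ℝ} (hC : 0 < C) (hθ : 0 < θ) (hθ1 : θ < 1) (hδ : 0 ≤ δ) :
    ∀ᶠ n : ℕ in atTop, guarantee C θ δ n ≤ Pr fun σ : Ord n ↦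
      OnTrack (matchingRounds C θ n) (n / √C) (degreeCap n) (history σ (numEdges n)) := by
  have hK : Tendsto (fun n : ℕ ↦ (n : ℝ) / √C) atTop atTop :=
    tendsto_natCast_atTop_atTop.atTop_div_const (Real.sqrt_pos.2 hC)
  filter_upwards [eventually_natCast_sub_one_le_mul_unseen hC hθ hθ1,
    eventually_matchingRounds_le hC hθ hθ1, eventually_density_le hC hθ hθ1,
    (tendsto_two_div_mul_natCast θ).eventually_le_const one_pos, hK.eventually_ge_atTop 1,
    eventually_degreeCap_le] with n hunseen hm hdensity ht1 hK1 hcap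
  have hlower := le_expect_potential (V := Fin n) (m := matchingRounds C θ n) (D := degreeCap n)
    (K := n / √C) (p := θ / C) (t := 2 / (θ * n)) (κ := 2 * degreeCap n / n) (by positivity) hδ
    (by positivity) hK1 (by simpa using hdensity) (by positivity) ht1 hm (by simpa using hunseen)
  have hupper := expect_potential_le_expect_onTrack (V := Fin n) (K := n / √C)
    (κ := 2 * degreeCap n / n) (by positivity) (by simpa using hcap) hm
  rw [Fintype.card_fin] at hlower
  exact (hlower.trans hupper).trans (expect_eq_Pr _).le

end Parameters

/-- For every constant `C > 0`, Builder has a deterministic online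
strategy such that, with probability at least `(1 − o(1))·√C·e^{−C}` as `n → ∞`,
she purchases at most `(1/2 + C^{−1/2}/2)·n` edges among `e_1, …, e_{τ_1}` and her
graph `B_{τ_1}` has minimum degree at least `1`. -/
theorem builder_min_degree_one (C : ℝ) (hC : 0 < C) :
    ∃ st : (n : ℕ) → Strategy n,
      ∀ η : ℝ, 0 < η → ∀ᶠ n : ℕ in Filter.atTop,
        (1 - η) * Real.sqrt C * Real.exp (-C) ≤
          Pr (fun σ : Ord n =>
            ((buy (st n) σ (tau 1 σ)).card : ℝ) ≤ (1 / 2 + (Real.sqrt C)⁻¹ / 2) * n ∧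
            ∀ v : Fin n, 1 ≤ deg (buy (st n) σ (tau 1 σ)) v) := by
  have hsqrt : 0 < √C := Real.sqrt_pos.2 hC
  have hβ : 1 - (√C)⁻¹ < 1 := sub_lt_self 1 (inv_pos.2 hsqrt)
  obtain ⟨θ, hθ, hθ1, hβθ⟩ := exists_lt_sq hβ
  obtain ⟨δ, hδ, hrate⟩ := exists_mul_lt_mul_one_sub_exp hβ (by positivity) hβθ
  refine ⟨fun n ↦ greedyStrategy (matchingRounds C θ n), fun η hη ↦ ?_⟩
  have hlt : (1 - η) * √C * Real.exp (-C) < √C * Real.exp (-C) := by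
    nlinarith [mul_pos hη (mul_pos hsqrt (Real.exp_pos (-C)))]
  filter_upwards [(tendsto_guarantee hC hθ hδ.le hrate).eventually_const_lt hlt,
    eventually_guarantee_le_Pr hC hθ hθ1 hδ.le, eventually_ge_atTop 2] with n hguarantee hPr hn
  refine (hguarantee.le.trans hPr).trans (Pr_mono fun σ hσ ↦ ?_)
  obtain ⟨hcard, hdeg⟩ := hσ.greedyStrategy_wins hn (by positivity)
  exact ⟨by linarith [div_eq_mul_inv (n : ℝ) √C], hdeg⟩

end RGP
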